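/- Let T be a rooted tree on the vertex set of a flow graph G, and let G' be the derived graph of G with respect to T. If T has both the parent property and the sibling property, then for every vertex v ≠ s, either (t(v), v) ∈ A or at least two distinct arcs of G' enter v. -/

import Mathlib

variable {V : Type*}

/-- `IsWalk A u v p`: `p` is a path from `u` to `v` in the digraph with arc
relation `A`, listing all of its vertices in order. -/
def IsWalk (A : V → V → Prop) (u v : V) (p : List V) : Prop :=
  p.Chain' A ∧ p.head? = some u ∧ p.getLast? = some v

/-- A flow graph: a directed graph with arc relation `A` and start vertex `s`
such that every vertex is reachable from `s` and no arc enters `s`. -/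
structure FlowGraph (V : Type*) where
  A : V → V → Prop
  s : V
  reach : ∀ v : V, ∃ p : List V, IsWalk A s v p
  no_enter : ∀ v : V, ¬ A v s

/-- `DomOn A s v w`: `v` lies on every path from `s` to `w` in the digraph with
arc relation `A`. -/
def DomOn (A : V → V → Prop) (s v w : V) : Prop :=
  ∀ p : List V, IsWalk A s w p → v ∈ p

/-- `v` dominates `w` in the flow graph `G`. -/
def FlowGraph.Dom (G : FlowGraph V) (v w : V) : Prop :=
  DomOn G.A G.s v w

/-- A rooted tree on vertex set `V`, given by a parent function: the root is a
fixed point of the parent function, and iterating the parent function from any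
vertex eventually reaches the root. -/
structure ParentTree (V : Type*) where
  parent : V → V
  root : V
  parent_root : parent root = root
  reaches_root : ∀ v : V, ∃ n : ℕ, parent^[n] v = root

/-- `T.Anc x y`: `x` is an ancestor of `y` in the rooted tree `T` (every vertex
is an ancestor of itself). -/
def ParentTree.Anc (T : ParentTree V) (x y : V) : Prop :=
  ∃ n : ℕ, T.parent^[n] y = x

/-- `T` has the parent property with respect to `G`: for every arc `(v, w)`,
the parent of `w` is an ancestor of `v` in `T`. -/
def ParentProperty (G : FlowGraph V) (T : ParentTree V) : Prop :=
  ∀ v w : V, G.A v w → T.Anc (T.parent w) v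

/-- The sibling property with respect to an arbitrary arc relation `A` with
start vertex `s`: no non-root vertex dominates a distinct vertex with the same
parent. -/
def SiblingPropertyOn (A : V → V → Prop) (s : V) (T : ParentTree V) : Prop :=
  ∀ v w : V, v ≠ T.root → w ≠ T.root → v ≠ w → T.parent v = T.parent w →
    ¬ DomOn A s v w

/-- `T` has the sibling property with respect to the flow graph `G`. -/
def SiblingProperty (G : FlowGraph V) (T : ParentTree V) : Prop :=
  SiblingPropertyOn G.A G.s T

/-- `T` is the dominator tree of the digraph with arc relation `A` and start
vertex `s`: `T` is rooted at `s`, and the parent of every vertex `v ≠ s` is its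
immediate dominator, i.e. a strict dominator of `v` that is dominated by every
strict dominator of `v`. -/
def IsDomTreeOn (A : V → V → Prop) (s : V) (T : ParentTree V) : Prop :=
  T.root = s ∧ ∀ v : V, v ≠ s →
    DomOn A s (T.parent v) v ∧ T.parent v ≠ v ∧
    ∀ u : V, DomOn A s u v → u ≠ v → DomOn A s u (T.parent v)

/-- `T` is the dominator tree of the flow graph `G`. -/
def IsDomTree (G : FlowGraph V) (T : ParentTree V) : Prop :=
  IsDomTreeOn G.A G.s T

/-- `ord` is (the numbering of) a preorder of the rooted tree `T`: an injective
numbering of the vertices such that for every vertex `v` the descendants of `v`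
are ordered consecutively, with `v` first. -/
def IsTreePreorder (T : ParentTree V) (ord : V → ℕ) : Prop :=
  Function.Injective ord ∧
  (∀ v x : V, T.Anc v x → ord v ≤ ord x) ∧
  (∀ v x y z : V, T.Anc v x → T.Anc v z → ord x ≤ ord y → ord y ≤ ord z →
    T.Anc v y)

/-- A preorder `ord` of `T` is low-high on the digraph with arc relation `A`
and start vertex `s`: for every `v ≠ s`, either `(t(v), v)` is an arc, or there
are arcs `(u, v)` and `(w, v)` with `u < v < w` in the order and `w` not a
descendant of `v` in `T`. -/
def LowHighOn (A : V → V → Prop) (s : V) (T : ParentTree V) (ord : V → ℕ) :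
    Prop :=
  IsTreePreorder T ord ∧
  ∀ v : V, v ≠ s → (A (T.parent v) v ∨
    ∃ u w : V, A u v ∧ A w v ∧ ord u < ord v ∧ ord v < ord w ∧ ¬ T.Anc v w)

/-- A low-high order of `T` on the flow graph `G`. -/
def LowHigh (G : FlowGraph V) (T : ParentTree V) (ord : V → ℕ) : Prop :=
  LowHighOn G.A G.s T ord

/-- `B` is (the arc relation of) a spanning tree of `G` rooted at `s`: a
subgraph of `G` in which no arc enters `s`, every vertex other than `s` has
exactly one entering arc, and every vertex is reachable from `s`. -/
def IsSpanningTree (G : FlowGraph V) (B : V → V → Prop) : Prop :=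
  (∀ u v : V, B u v → G.A u v) ∧
  (∀ v : V, ¬ B v G.s) ∧
  (∀ v : V, v ≠ G.s → ∃! u : V, B u v) ∧
  (∀ v : V, ∃ p : List V, IsWalk B G.s v p)

/-- Spanning trees `B` and `R` of `G` rooted at `s` are independent: for every
vertex `v`, the paths from `s` to `v` in `B` and in `R` have in common only
dominators of `v`. -/
def Independent (G : FlowGraph V) (B R : V → V → Prop) : Prop :=
  ∀ v : V, ∀ p q : List V, IsWalk B G.s v p → IsWalk R G.s v q →
    ∀ x : V, x ∈ p → x ∈ q → G.Dom x v

/-- Spanning trees `B` and `R` of `G` rooted at `s` are strongly independent: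
for every pair of vertices `v`, `w`, either the path from `s` to `v` in `B` and
the path from `s` to `w` in `R` have in common only common dominators of `v`
and `w`, or the same holds with the roles of `B` and `R` exchanged. -/
def StronglyIndependent (G : FlowGraph V) (B R : V → V → Prop) : Prop :=
  ∀ v w : V,
    (∀ p q : List V, IsWalk B G.s v p → IsWalk R G.s w q →
      ∀ x : V, x ∈ p → x ∈ q → G.Dom x v ∧ G.Dom x w) ∨
    (∀ p q : List V, IsWalk R G.s v p → IsWalk B G.s w q →
      ∀ x : V, x ∈ p → x ∈ q → G.Dom x v ∧ G.Dom x w)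

/-- `IsDerivedArcOf G T v b a`: `(a, b)` is the derived arc of the arc `(v, b)`
of `G` with respect to `T`: `b` is not an ancestor of `v` in `T`, and `a = v`
if `v` is the parent of `b`, while otherwise `a` is the sibling of `b` in `T`
that is an ancestor of `v`. -/
def IsDerivedArcOf (G : FlowGraph V) (T : ParentTree V) (v b a : V) : Prop :=
  G.A v b ∧ ¬ T.Anc b v ∧
    ((v = T.parent b ∧ a = v) ∨
     (v ≠ T.parent b ∧ a ≠ T.root ∧ T.parent a = T.parent b ∧ T.Anc a v))

/-- The arc relation of the derived graph of `G` with respect to `T`. -/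
def DerivedArc (G : FlowGraph V) (T : ParentTree V) (a b : V) : Prop :=
  ∃ v : V, IsDerivedArcOf G T v b a

/-- `S` is the vertex set of a strongly connected subgraph of the digraph with
arc relation `A`. -/
def StronglyConnectedSet (A : V → V → Prop) (S : Set V) : Prop :=
  S.Nonempty ∧ ∀ u ∈ S, ∀ v ∈ S, ∃ p : List V,
    IsWalk A u v p ∧ ∀ x ∈ p, x ∈ S

/-- `G` is reducible: every strongly connected subgraph has a single entry
vertex, i.e. a vertex of the subgraph contained in every path from `s` to a
vertex of the subgraph. -/
def Reducible (G : FlowGraph V) : Prop :=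
  ∀ S : Set V, StronglyConnectedSet G.A S →
    ∃ v ∈ S, ∀ u ∈ S, ∀ p : List V, IsWalk G.A G.s u p → v ∈ p

/-- A digraph is acyclic if it has no cycle (a path from a vertex to itself
with at least one arc). -/
def Acyclic (A : V → V → Prop) : Prop :=
  ¬ ∃ (v : V) (p : List V), IsWalk A v v p ∧ 2 ≤ p.length

/-- `IsHighWalk A ν u v p`: `p` is a high path from `u` to `v`: a path all of
whose vertices other than `u` and `v` are greater (in the numbering `ν`) than
both `u` and `v`. -/
def IsHighWalk (A : V → V → Prop) (ν : V → ℕ) (u v : V) (p : List V) : Prop :=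
  IsWalk A u v p ∧ ∀ x ∈ p, x ≠ u → x ≠ v → ν u < ν x ∧ ν v < ν x

/-! Under the parent property the subtree rooted at `u` can only be entered through `u`, so tree
ancestors dominate their descendants. Take a path from `s` to `v` and look at the first arc
`(x, v)` by which it enters the subtree of `v`. If `(t(v), v)` is not an arc, then `x ≠ t(v)`, so
the derived arc of `(x, v)` leaves a sibling `a` of `v`, and `a` lies on the path because it is an
ancestor of `x`. Hence every path from `s` to `v` contains a sibling of `v` with a derived arc
to `v`. One path gives `a`; by the sibling property another path avoids `a`, and it gives a second
such sibling. -/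

namespace ParentTree

variable {T : ParentTree V} {x y z : V}

theorem Anc.refl (T : ParentTree V) (x : V) : T.Anc x x :=
  ⟨0, rfl⟩

theorem Anc.trans (hxy : T.Anc x y) (hyz : T.Anc y z) : T.Anc x z := by
  obtain ⟨m, rfl⟩ := hxy
  obtain ⟨n, rfl⟩ := hyz
  exact ⟨m + n, Function.iterate_add_apply _ _ _ _⟩

theorem parent_anc (T : ParentTree V) (x : V) : T.Anc (T.parent x) x :=
  ⟨1, rfl⟩

theorem Anc.eq_or_anc_parent (h : T.Anc x y) : x = y ∨ T.Anc x (T.parent y) := by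
  obtain ⟨_ | n, hn⟩ := h
  · exact Or.inl hn.symm
  · exact Or.inr ⟨n, hn⟩

theorem anc_root_iff : T.Anc x T.root ↔ x = T.root := by
  refine ⟨?_, fun h ↦ h ▸ Anc.refl T x⟩
  rintro ⟨n, rfl⟩
  exact Function.iterate_fixed T.parent_root n

theorem Anc.exists_child_anc (h : T.Anc x y) (hne : x ≠ y) :
    ∃ a ≠ T.root, T.parent a = x ∧ T.Anc a y := by
  obtain ⟨n, hn⟩ := h
  induction n generalizing y with
  | zero => exact absurd hn.symm hne
  | succ n ih =>
    by_cases hx : x = T.parent y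
    · refine ⟨y, ?_, hx.symm, Anc.refl T y⟩
      rintro rfl
      exact hne (hx.trans T.parent_root)
    · obtain ⟨a, ha, hax, hay⟩ := ih hx hn
      exact ⟨a, ha, hax, hay.trans (T.parent_anc y)⟩

/-- `a` and `b` are siblings in `T`: distinct vertices with the same parent. The root is excluded
explicitly, since it is its own parent and would otherwise be a sibling of its children. -/
def IsSibling (T : ParentTree V) (a b : V) : Prop :=
  a ≠ T.root ∧ b ≠ T.root ∧ a ≠ b ∧ T.parent a = T.parent b

theorem exists_isSibling_anc (hpar : T.Anc (T.parent y) x) (hne : T.parent y ≠ x)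
    (hyx : ¬ T.Anc y x) : ∃ a, T.IsSibling a y ∧ T.Anc a x := by
  obtain ⟨a, ha, hay, hax⟩ := hpar.exists_child_anc hne
  refine ⟨a, ⟨ha, ?_, ?_, hay⟩, hax⟩
  · rintro rfl
    exact hyx (T.reaches_root x)
  · rintro rfl
    exact hyx hax

end ParentTree

section Walk

variable {A : V → V → Prop} {u w y : V} {p q : List V}

theorem isWalk_iff :
    IsWalk A u w p ↔ p.IsChain A ∧ p.head? = some u ∧ p.getLast? = some w :=
  Iff.rfl

theorem isWalk_singleton : IsWalk A u w [y] ↔ y = u ∧ y = w := by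
  simp [isWalk_iff]

theorem isWalk_append_singleton (hq : q ≠ []) :
    IsWalk A u w (q ++ [y]) ↔ y = w ∧ ∃ x, IsWalk A u x q ∧ A x w := by
  obtain ⟨x, hx⟩ := Option.ne_none_iff_exists'.mp (mt List.getLast?_eq_none_iff.mp hq)
  have hhead : (q ++ [y]).head? = q.head? := List.head?_append_of_ne_nil q hq
  simp only [isWalk_iff, List.isChain_append, List.IsChain.singleton, hx, hhead, Option.mem_def,
    Option.some.injEq, List.head?_cons, forall_eq', true_and, List.getLast?_append,
    List.getLast?_singleton, Option.or_some, Option.getD_some, ↓existsAndEq, and_true]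
  grind

theorem IsWalk.exists_entry {P : V → Prop} (hp : IsWalk A u w p) (hu : ¬ P u) (hw : P w) :
    ∃ x y q, IsWalk A u x q ∧ q ++ [y] <+: p ∧ A x y ∧ ¬ P x ∧ P y := by
  induction p using List.reverseRecOn generalizing w with
  | nil => simp [isWalk_iff] at hp
  | append_singleton q _ ih =>
    rcases eq_or_ne q [] with rfl | hq
    · obtain ⟨rfl, rfl⟩ := isWalk_singleton.mp hp
      exact absurd hw hu
    · obtain ⟨rfl, x, hwalk, hxw⟩ := (isWalk_append_singleton hq).mp hp
      by_cases hx : P x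
      · obtain ⟨x', y, q', hwalk', hpre, hentry⟩ := ih hwalk hx
        exact ⟨x', y, q', hwalk', hpre.trans (List.prefix_append _ _), hentry⟩
      · exact ⟨x, _, q, hwalk, List.prefix_rfl, hxw, hx, hw⟩

end Walk

namespace ParentProperty

variable {G : FlowGraph V} {T : ParentTree V} {u v w x y : V} {p : List V}

theorem eq_of_arc_of_anc (hpp : ParentProperty G T) (hxy : G.A x y) (hy : T.Anc u y)
    (hx : ¬ T.Anc u x) : u = y :=
  hy.eq_or_anc_parent.resolve_right fun h ↦ hx (h.trans (hpp x y hxy))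

theorem exists_arc_of_isWalk (hpp : ParentProperty G T) (hroot : T.root = G.s)
    (hu : u ≠ G.s) (huw : T.Anc u w) (hp : IsWalk G.A G.s w p) :
    ∃ x q, IsWalk G.A G.s x q ∧ q ++ [u] <+: p ∧ G.A x u ∧ ¬ T.Anc u x := by
  have hs : ¬ T.Anc u G.s := by rwa [← hroot, ParentTree.anc_root_iff, hroot]
  obtain ⟨x, y, q, hq, hpre, hxy, hx, hy⟩ := hp.exists_entry hs huw
  obtain rfl := hpp.eq_of_arc_of_anc hxy hy hx
  exact ⟨x, q, hq, hpre, hxy, hx⟩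

theorem dom_of_anc (hpp : ParentProperty G T) (hroot : T.root = G.s) (huw : T.Anc u w) :
    G.Dom u w := by
  intro p hp
  by_cases hu : u = G.s
  · exact hu ▸ List.mem_of_mem_head? hp.2.1
  · obtain ⟨_, _, _, hpre, _⟩ := hpp.exists_arc_of_isWalk hroot hu huw hp
    exact hpre.subset (by simp)

theorem exists_isSibling_derivedArc (hpp : ParentProperty G T) (hxv : G.A x v)
    (hne : x ≠ T.parent v) (hvx : ¬ T.Anc v x) :
    ∃ a, T.IsSibling a v ∧ T.Anc a x ∧ DerivedArc G T a v := by
  obtain ⟨a, hav, hax⟩ := ParentTree.exists_isSibling_anc (hpp x v hxv) hne.symm hvx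
  exact ⟨a, hav, hax, x, hxv, hvx, Or.inr ⟨hne, hav.1, hav.2.2.2, hax⟩⟩

theorem exists_mem_isSibling_derivedArc (hpp : ParentProperty G T) (hroot : T.root = G.s)
    (hv : v ≠ G.s) (harc : ¬ G.A (T.parent v) v) (hp : IsWalk G.A G.s v p) :
    ∃ a ∈ p, T.IsSibling a v ∧ DerivedArc G T a v := by
  obtain ⟨x, q, hq, hpre, hxv, hvx⟩ :=
    hpp.exists_arc_of_isWalk hroot hv (ParentTree.Anc.refl T v) hp
  have hne : x ≠ T.parent v := fun h ↦ harc (h ▸ hxv)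
  obtain ⟨a, hav, hax, hd⟩ := hpp.exists_isSibling_derivedArc hxv hne hvx
  have haq : a ∈ q := hpp.dom_of_anc hroot hax q hq
  exact ⟨a, hpre.subset (List.mem_append_left [v] haq), hav, hd⟩

end ParentProperty

theorem SiblingProperty.exists_isWalk_notMem {G : FlowGraph V} {T : ParentTree V} {a v : V}
    (hsp : SiblingProperty G T) (h : T.IsSibling a v) : ∃ p, IsWalk G.A G.s v p ∧ a ∉ p := by
  obtain ⟨ha, hv, hne, hpar⟩ := h
  simpa only [DomOn, not_forall, exists_prop] using hsp a v ha hv hne hpar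

theorem stmt14_general (G : FlowGraph V) (T : ParentTree V)
    (hroot : T.root = G.s) (hpp : ParentProperty G T)
    (hsp : SiblingProperty G T)
    (v : V) (hv : v ≠ G.s) :
    G.A (T.parent v) v ∨
    ∃ a₁ a₂ : V, a₁ ≠ a₂ ∧ DerivedArc G T a₁ v ∧ DerivedArc G T a₂ v := by
  refine or_iff_not_imp_left.mpr fun harc ↦ ?_
  obtain ⟨p, hp⟩ := G.reach v
  obtain ⟨a, -, hav, hda⟩ := hpp.exists_mem_isSibling_derivedArc hroot hv harc hp
  obtain ⟨q, hq, haq⟩ := hsp.exists_isWalk_notMem hav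
  obtain ⟨b, hbq, -, hdb⟩ := hpp.exists_mem_isSibling_derivedArc hroot hv harc hq
  exact ⟨a, b, (ne_of_mem_of_not_mem hbq haq).symm, hda, hdb⟩

/-- If `T` has the parent property and the sibling property, then for every
vertex `v ≠ s`, either `(t(v), v)` is an arc of `G` or at least two distinct
arcs of the derived graph enter `v`. -/
theorem stmt14 [Fintype V] (G : FlowGraph V) (T : ParentTree V)
    (hroot : T.root = G.s) (hpp : ParentProperty G T)
    (hsp : SiblingProperty G T)
    (v : V) (hv : v ≠ G.s) :
    G.A (T.parent v) v ∨
    ∃ a₁ a₂ : V, a₁ ≠ a₂ ∧ DerivedArc G T a₁ v ∧ DerivedArc G T a₂ v :=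
  stmt14_general G T hroot hpp hsp v hv
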